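/- Let C ⊆ F_2^n be a binary linear code with minimum distance at least 2t+1, and let u, e, e_1, r be natural numbers with u + e − e_1 > t. Then the number of triples (U, E, p) with |U| = u, |E| = e, U ∩ E = ∅, and wt(p) = e_1, for which there exists a codeword c ∈ C with wt(c) = r, d(y^(2), c) ≤ t, and d_E(c) = d_E(0) = u, equals A_r · Σ_{(a,b) ∈ S_{a,b}} Σ_{(λ,γ) ∈ (S_λ × S_γ) ∩ S_=} C(r,a)·C(n−r,b)·C(n−r−b,λ)·C(b,γ)·C(r−a, e−e_1−γ)·C(a, e_1−λ), where S_{a,b} = {(a,b) : a + b ≤ t, r + b = u + e − e_1 + a}, S_λ = {λ : λ ≤ n−r−b, e_1 − λ ≤ a}, S_γ = {γ : γ ≤ b, e − e_1 − γ ≤ r − a}, and S_= = {(λ,γ) : (b − γ) + (a − (e_1 − λ)) = u}. -/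

import Mathlib

/-- First test pattern: erasures filled with `p`. -/
def testPattern1 {n : ℕ} (U E : Finset (Fin n)) (p : Fin n → ZMod 2) :
    Fin n → ZMod 2 :=
  fun j => if j ∈ U then 1 else if j ∈ E then p j else 0

/-- Second test pattern: erasures filled with the complementary pattern `1 + p`. -/
def testPattern2 {n : ℕ} (U E : Finset (Fin n)) (p : Fin n → ZMod 2) :
    Fin n → ZMod 2 :=
  fun j => if j ∈ U then 1 else if j ∈ E then 1 + p j else 0

/-- The erased distance `d_E(c) = |{i ∉ E : c_i ≠ y_i}|`, where `y_i = 1` for `i ∈ U`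
and `y_i = 0` for `i ∉ U ∪ E`. -/
def erasedDist {n : ℕ} (U E : Finset (Fin n)) (c : Fin n → ZMod 2) : ℕ :=
  (Finset.univ.filter
    (fun i => i ∉ E ∧ c i ≠ (if i ∈ U then (1 : ZMod 2) else 0))).card

/-- Binomial coefficient with an integer lower argument (zero when negative). -/
def chooseZ (m : ℕ) (k : ℤ) : ℕ := if 0 ≤ k then m.choose k.toNat else 0

/-!
Fix a word `c` with support `R`. A triple `(U, E, p)` is the same thing as a triple `(Y, F, P)`,
where `Y = supp y⁽²⁾`, `F = E \ supp p ⊆ Y` are the erasures that `y⁽²⁾` fills with `1`, and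
`P = supp p ⊆ Yᶜ` are those it fills with `0`. Both distances are then read off the symmetric
difference `Y ∆ R`, namely `d(y⁽²⁾, c) = |Y ∆ R|` and `d_E(c) = |(Y ∆ R) \ (F ∪ P)|`.
With `a = |R \ Y|`, `b = |Y \ R|`, `λ = |P \ R|`, `γ = |F \ R|`, every requirement on the triple
becomes a linear condition on these four numbers, once `|F ∩ R| = e - e₁ - γ` and
`|P ∩ R| = e₁ - λ`. The triples with given `(a, b, λ, γ)` are counted by choosing `Y`, then
`F ⊆ Y` and `P ⊆ Yᶜ`, each separately inside and outside `R`.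
Finally, no triple is counted for two codewords, as balls of radius `t` around them are disjoint.
-/

section TieCount

open Finset
open scoped symmDiff

section Counting

theorem card_eq_sum_sum_card_fiberwise {α β γ : Type*} [DecidableEq β] [DecidableEq γ]
    {s : Finset α} {f : α → β} {g : α → γ} {I : Finset β} {J : β → Finset γ}
    (hf : ∀ x ∈ s, f x ∈ I) (hg : ∀ x ∈ s, g x ∈ J (f x)) :
    #s = ∑ i ∈ I, ∑ j ∈ J i, #{x ∈ s | f x = i ∧ g x = j} := by
  rw [card_eq_sum_card_fiberwise hf]
  refine sum_congr rfl fun i _ => ?_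
  have maps_fiber : Set.MapsTo g ({x ∈ s | f x = i} : Finset α) (J i) := by
    intro x hx
    obtain ⟨hxs, rfl⟩ := mem_filter.1 hx
    exact hg x hxs
  simp_rw [card_eq_sum_card_fiberwise maps_fiber, filter_filter]

theorem card_filter_mem_and_mem_and_mem {α β γ : Type*} [Fintype α] [Fintype β] [Fintype γ]
    [DecidableEq α] [DecidableEq β] [DecidableEq γ]
    (I : Finset α) (J : α → Finset β) (K : α → Finset γ) :
    #{T : α × β × γ | T.1 ∈ I ∧ T.2.1 ∈ J T.1 ∧ T.2.2 ∈ K T.1} = ∑ x ∈ I, #(J x) * #(K x) := by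
  rw [card_eq_sum_card_fiberwise (f := Prod.fst) (t := I) fun T hT => (mem_filter.1 hT).2.1]
  refine sum_congr rfl fun x hx => ?_
  rw [← card_product, ← card_map (.sectR x (β × γ))]
  congr 1
  aesop

theorem chooseZ_natCast (m k : ℕ) : chooseZ m k = m.choose k := by
  simp [chooseZ]

theorem card_filter_powerset_card_eq {ι : Type*} (S : Finset ι) (k : ℤ) :
    #{X ∈ S.powerset | (#X : ℤ) = k} = chooseZ #S k := by
  rcases le_or_gt 0 k with hk | hk
  · lift k to ℕ using hk
    simp_rw [Nat.cast_inj, ← powersetCard_eq_filter, card_powersetCard, chooseZ_natCast]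
  · rw [chooseZ, if_neg hk.not_ge, card_eq_zero, filter_eq_empty_iff]
    omega

variable {ι : Type*} [DecidableEq ι]

theorem card_filter_powerset_card_inter_card_sdiff (R S : Finset ι) (i j : ℤ) :
    #{X ∈ S.powerset | (#(X ∩ R) : ℤ) = i ∧ (#(X \ R) : ℤ) = j} =
      chooseZ #(S ∩ R) i * chooseZ #(S \ R) j := by
  have parts_union {A B : Finset ι} (hA : A ⊆ S ∩ R) (hB : B ⊆ S \ R) :
      (A ∪ B) ∩ R = A ∧ (A ∪ B) \ R = B := by
    constructor <;> grind
  rw [← card_filter_powerset_card_eq, ← card_filter_powerset_card_eq, ← card_product]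
  refine card_nbij' (fun X => (X ∩ R, X \ R)) (fun Q => Q.1 ∪ Q.2) ?_ ?_ ?_ ?_
  · intro X hX
    simp only [mem_coe, mem_filter, mem_powerset, mem_product] at hX ⊢
    exact ⟨⟨inter_subset_inter_right hX.1, hX.2.1⟩, sdiff_subset_sdiff hX.1 le_rfl, hX.2.2⟩
  · rintro ⟨A, B⟩ hQ
    simp only [mem_coe, mem_filter, mem_powerset, mem_product] at hQ ⊢
    obtain ⟨⟨hAS, hA⟩, hBS, hB⟩ := hQ
    rw [(parts_union hAS hBS).1, (parts_union hAS hBS).2]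
    exact ⟨union_subset (hAS.trans inter_subset_left) (hBS.trans sdiff_subset), hA, hB⟩
  · intro X _
    exact (union_comm _ _).trans (sdiff_union_inter X R)
  · rintro ⟨A, B⟩ hQ
    simp only [mem_coe, mem_filter, mem_powerset, mem_product] at hQ
    obtain ⟨⟨hAS, -⟩, hBS, -⟩ := hQ
    exact Prod.ext (parts_union hAS hBS).1 (parts_union hAS hBS).2

theorem card_filter_card_sdiff_card_sdiff [Fintype ι] (R : Finset ι) (a b : ℕ) :
    #{Y : Finset ι | #(R \ Y) = a ∧ #(Y \ R) = b} = (#R).choose a * (#Rᶜ).choose b := by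
  have symmDiff_parts (Y : Finset ι) : (Y ∆ R) ∩ R = R \ Y ∧ (Y ∆ R) \ R = Y \ R := by
    constructor <;> ext i <;> simp only [mem_inter, mem_sdiff, mem_symmDiff] <;> tauto
  have count := card_filter_powerset_card_inter_card_sdiff R univ a b
  simp only [powerset_univ, Nat.cast_inj, chooseZ_natCast, univ_inter, ← compl_eq_univ_sdiff]
    at count
  rw [← count]
  refine card_equiv (symmDiff_left_involutive R).toPerm fun Y => ?_
  simp [symmDiff_parts]

theorem card_sdiff_add_card_sdiff_eq_card_symmDiff (R Y : Finset ι) :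
    #(R \ Y) + #(Y \ R) = #(Y ∆ R) := by
  rw [symmDiff_comm, symmDiff_def, sup_eq_union, card_union_of_disjoint disjoint_sdiff_sdiff]

theorem union_symmDiff_sdiff {R U F E : Finset ι} (hF : F ⊆ E) :
    ((U ∪ F) ∆ R) \ E = (U ∆ R) \ E := by
  ext i
  have hFi := @hF i
  simp only [mem_sdiff, mem_symmDiff, mem_union]
  tauto

end Counting

section Patterns

variable {ι : Type*} [Fintype ι] [DecidableEq ι]

/-- The triples `(Y, F, P)` that encode, for a word with support `R`, the error-erasure triples
`(U, E, p)` producing a tie: `Y` is the support of the second test pattern, `F` and `P` are the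
erasures that it fills with `1` and with `0`. Thus `U = Y \ F`, `E = F ∪ P` and `P = supp p`. -/
def tiePatterns (R : Finset ι) (t u e e₁ : ℕ) : Finset (Finset ι × Finset ι × Finset ι) :=
  {T | T.2.1 ⊆ T.1 ∧ T.2.2 ⊆ T.1ᶜ ∧ #(T.1 \ T.2.1) = u ∧ #T.2.1 + #T.2.2 = e ∧ #T.2.2 = e₁ ∧
    #(T.1 ∆ R) ≤ t ∧ #((T.1 ∆ R) \ (T.2.1 ∪ T.2.2)) = u}

/-- The index set `S_{a,b}`: `a` and `b` count the coordinates inside and outside the support of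
a codeword of weight `r` at which the second test pattern differs from it. -/
def flipCounts (t u e e₁ r : ℕ) : Finset (ℕ × ℕ) :=
  {ab ∈ range (t + 1) ×ˢ range (t + 1) |
    ab.1 + ab.2 ≤ t ∧ (r : ℤ) + ab.2 = u + e - e₁ + ab.1}

/-- The index set `(S_λ × S_γ) ∩ S_=`: outside the support of a codeword of weight `r`, the
second test pattern fills `λ` erasures with `0` and `γ` erasures with `1`. -/
def erasureCounts (n u e e₁ r a b : ℕ) : Finset (ℕ × ℕ) :=
  {lg ∈ range (n + 1) ×ˢ range (n + 1) |
    ((lg.1 : ℤ) ≤ n - r - b ∧ (e₁ : ℤ) - lg.1 ≤ a) ∧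
    ((lg.2 : ℤ) ≤ b ∧ (e : ℤ) - e₁ - lg.2 ≤ (r : ℤ) - a) ∧
    ((b : ℤ) - lg.2 + ((a : ℤ) - ((e₁ : ℤ) - lg.1)) = u)}

variable {R Y F P : Finset ι}

theorem card_symmDiff_sdiff_union (hF : F ⊆ Y) (hP : P ⊆ Yᶜ) :
    #((Y ∆ R) \ (F ∪ P)) + (#(F \ R) + #(P ∩ R)) = #(Y ∆ R) := by
  have disjoint_FP : Disjoint F P := (subset_compl_iff_disjoint_left.1 hP).mono_left hF
  have erased_flips : (Y ∆ R) ∩ (F ∪ P) = F \ R ∪ P ∩ R := by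
    ext i
    have hFi := @hF i
    have hPi := @hP i
    simp only [mem_inter, mem_sdiff, mem_symmDiff, mem_union, mem_compl] at hPi ⊢
    tauto
  rw [← card_union_of_disjoint (disjoint_FP.mono sdiff_subset inter_subset_left),
    ← erased_flips, card_sdiff_add_card_inter]

theorem mem_tiePatterns_iff_counts {t u e e₁ : ℕ} :
    (Y, F, P) ∈ tiePatterns R t u e e₁ ↔
      F ⊆ Y ∧ P ⊆ Yᶜ ∧ (#(R \ Y), #(Y \ R)) ∈ flipCounts t u e e₁ #R ∧
        (#(P \ R), #(F \ R)) ∈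
          erasureCounts (Fintype.card ι) u e e₁ #R #(R \ Y) #(Y \ R) ∧
        (#(F ∩ R) : ℤ) = e - e₁ - #(F \ R) ∧ (#(P ∩ R) : ℤ) = e₁ - #(P \ R) := by
  simp only [tiePatterns, flipCounts, erasureCounts, mem_filter, mem_univ, true_and,
    mem_product, mem_range]
  refine and_congr_right fun hF => and_congr_right fun hP => ?_
  have card_flips := card_sdiff_add_card_sdiff_eq_card_symmDiff R Y
  have card_kept_flips := card_symmDiff_sdiff_union (R := R) hF hP
  have card_R : #(R \ Y) + #(Y ∩ R) = #R := by rw [inter_comm, card_sdiff_add_card_inter]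
  have card_Y := card_sdiff_add_card_inter Y R
  have card_F := card_sdiff_add_card_inter F R
  have card_P := card_sdiff_add_card_inter P R
  have card_U := card_sdiff_add_card_eq_card hF
  have card_F_sdiff_le := card_le_card (sdiff_subset_sdiff hF le_rfl : F \ R ⊆ Y \ R)
  have card_P_inter_le : #(P ∩ R) ≤ #(R \ Y) := by
    rw [inter_comm, sdiff_eq_inter_compl]
    exact card_le_card (inter_subset_inter_left hP)
  have card_P_sdiff_le : #(P \ R) + #(Y \ R) + #R ≤ Fintype.card ι := by
    rw [← card_union_of_disjoint, ← card_union_of_disjoint]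
    · exact card_le_univ _
    · exact disjoint_union_left.2 ⟨sdiff_disjoint, sdiff_disjoint⟩
    · exact (subset_compl_iff_disjoint_right.1 hP).mono sdiff_subset sdiff_subset
  omega

theorem card_filter_subset_and_subset_compl (R : Finset ι) (a b : ℕ) (i j k l : ℤ) :
    #{T : Finset ι × Finset ι × Finset ι |
        (#(R \ T.1) = a ∧ #(T.1 \ R) = b) ∧
        (T.2.1 ⊆ T.1 ∧ (#(T.2.1 ∩ R) : ℤ) = i ∧ (#(T.2.1 \ R) : ℤ) = j) ∧
        T.2.2 ⊆ T.1ᶜ ∧ (#(T.2.2 ∩ R) : ℤ) = k ∧ (#(T.2.2 \ R) : ℤ) = l} =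
      (#R).choose a * (#Rᶜ).choose b *
        (chooseZ (#R - a) i * chooseZ b j * (chooseZ a k * chooseZ (#Rᶜ - b) l)) := by
  have count := card_filter_mem_and_mem_and_mem
    ({Y | #(R \ Y) = a ∧ #(Y \ R) = b} : Finset (Finset ι))
    (fun Y => {F ∈ Y.powerset | (#(F ∩ R) : ℤ) = i ∧ (#(F \ R) : ℤ) = j})
    (fun Y => {P ∈ Yᶜ.powerset | (#(P ∩ R) : ℤ) = k ∧ (#(P \ R) : ℤ) = l})
  simp only [mem_filter, mem_univ, true_and, mem_powerset,
    card_filter_powerset_card_inter_card_sdiff] at count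
  rw [count, ← card_filter_card_sdiff_card_sdiff, ← smul_eq_mul (#_), ← sum_const]
  refine sum_congr rfl fun Y hY => ?_
  obtain ⟨rfl, rfl⟩ := (mem_filter.1 hY).2
  have card_inter : #(Y ∩ R) = #R - #(R \ Y) := by
    rw [inter_comm, ← card_sdiff_add_card_inter R Y, Nat.add_sub_cancel_left]
  have compl_inter : Yᶜ ∩ R = R \ Y := by rw [inter_comm, sdiff_eq_inter_compl]
  have card_compl_sdiff : #(Yᶜ \ R) = #Rᶜ - #(Y \ R) := by
    have compl_sdiff : Yᶜ \ R = Rᶜ \ (Y \ R) := by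
      ext i
      simp only [mem_sdiff, mem_compl]
      tauto
    rw [compl_sdiff, card_sdiff_of_subset fun i hi => mem_compl.2 (mem_sdiff.1 hi).2]
  rw [card_inter, compl_inter, card_compl_sdiff]

theorem card_tiePatterns_fiber {t u e e₁ a b l g : ℕ} (hab : (a, b) ∈ flipCounts t u e e₁ #R)
    (hlg : (l, g) ∈ erasureCounts (Fintype.card ι) u e e₁ #R a b) :
    #{T ∈ tiePatterns R t u e e₁ |
        (#(R \ T.1), #(T.1 \ R)) = (a, b) ∧ (#(T.2.2 \ R), #(T.2.1 \ R)) = (l, g)} =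
      (#R).choose a * (#Rᶜ).choose b * (#Rᶜ - b).choose l * b.choose g *
        chooseZ (#R - a) ((e : ℤ) - e₁ - g) * chooseZ a ((e₁ : ℤ) - l) := by
  have count := card_filter_subset_and_subset_compl R a b (e - e₁ - g) g (e₁ - l) l
  rw [chooseZ_natCast, chooseZ_natCast] at count
  convert count using 1
  · congr 1
    ext ⟨Y, F, P⟩
    simp only [mem_filter, mem_tiePatterns_iff_counts, mem_univ, true_and, Prod.mk.injEq,
      Nat.cast_inj]
    constructor
    · rintro ⟨⟨hF, hP, -, -, hFR, hPR⟩, ⟨rfl, rfl⟩, rfl, rfl⟩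
      exact ⟨⟨rfl, rfl⟩, ⟨hF, hFR, rfl⟩, hP, hPR, rfl⟩
    · rintro ⟨⟨rfl, rfl⟩, ⟨hF, hFR, rfl⟩, hP, hPR, rfl⟩
      exact ⟨⟨hF, hP, hab, hlg, hFR, hPR⟩, ⟨rfl, rfl⟩, rfl, rfl⟩
  · ring

theorem card_tiePatterns (R : Finset ι) (t u e e₁ : ℕ) :
    #(tiePatterns R t u e e₁) =
      ∑ ab ∈ flipCounts t u e e₁ #R,
        ∑ lg ∈ erasureCounts (Fintype.card ι) u e e₁ #R ab.1 ab.2,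
          (#R).choose ab.1 * (#Rᶜ).choose ab.2 * (#Rᶜ - ab.2).choose lg.1 * ab.2.choose lg.2 *
            chooseZ (#R - ab.1) ((e : ℤ) - e₁ - lg.2) * chooseZ ab.1 ((e₁ : ℤ) - lg.1) := by
  have fiberwise := card_eq_sum_sum_card_fiberwise (s := tiePatterns R t u e e₁)
    (f := fun T => (#(R \ T.1), #(T.1 \ R))) (g := fun T => (#(T.2.2 \ R), #(T.2.1 \ R)))
    (J := fun ab => erasureCounts (Fintype.card ι) u e e₁ #R ab.1 ab.2)
    (fun _ hT => (mem_tiePatterns_iff_counts.1 hT).2.2.1)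
    (fun _ hT => (mem_tiePatterns_iff_counts.1 hT).2.2.2.1)
  rw [fiberwise]
  exact sum_congr rfl fun ab hab => sum_congr rfl fun lg hlg => card_tiePatterns_fiber hab hlg

end Patterns

section Words

/-- Binary words correspond to sets of coordinates via their support, so that
`hammingNorm x` is by definition the cardinality of `suppEquiv x`. -/
def suppEquiv {ι : Type*} [Fintype ι] [DecidableEq ι] : (ι → ZMod 2) ≃ Finset ι where
  toFun x := {i | x i ≠ 0}
  invFun P i := if i ∈ P then 1 else 0
  left_inv x := by
    have eq_ite : ∀ z : ZMod 2, (if z ≠ 0 then 1 else 0) = z := by decide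
    funext i
    simpa using eq_ite (x i)
  right_inv P := by ext i; simp

theorem mem_suppEquiv {ι : Type*} [Fintype ι] [DecidableEq ι] {x : ι → ZMod 2} {i : ι} :
    i ∈ suppEquiv x ↔ x i ≠ 0 := by
  simp [suppEquiv]

theorem hammingDist_eq_card_symmDiff {ι : Type*} [Fintype ι] [DecidableEq ι]
    (x y : ι → ZMod 2) : hammingDist x y = #(suppEquiv x ∆ suppEquiv y) := by
  have ne_iff : ∀ z w : ZMod 2, z ≠ w ↔ z ≠ 0 ∧ ¬w ≠ 0 ∨ w ≠ 0 ∧ ¬z ≠ 0 := by decide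
  rw [hammingDist]
  congr 1
  ext i
  rw [mem_filter_univ, mem_symmDiff, mem_suppEquiv, mem_suppEquiv]
  exact ne_iff (x i) (y i)

variable {n : ℕ}

theorem suppEquiv_testPattern2 (U E : Finset (Fin n)) (p : Fin n → ZMod 2) :
    suppEquiv (testPattern2 U E p) = U ∪ E \ suppEquiv p := by
  have one_add_ne_zero_iff : ∀ z : ZMod 2, 1 + z ≠ 0 ↔ ¬z ≠ 0 := by decide
  ext i
  rw [mem_suppEquiv, mem_union, mem_sdiff, mem_suppEquiv, testPattern2]
  split_ifs with hU hE <;> simp [*]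

theorem erasedDist_eq_card_symmDiff_sdiff (U E : Finset (Fin n)) (c : Fin n → ZMod 2) :
    erasedDist U E c = #((U ∆ suppEquiv c) \ E) := by
  have ne_one_iff : ∀ z : ZMod 2, z ≠ 1 ↔ ¬z ≠ 0 := by decide
  rw [erasedDist]
  congr 1
  ext i
  rw [mem_filter_univ, mem_sdiff, mem_symmDiff, mem_suppEquiv]
  split_ifs with hU <;> simp [hU, ne_one_iff, and_comm]

/-- The triples `(U, E, p)` with `|U| = u`, `|E| = e`, `wt(p) = e₁` for which `c` lies within
distance `t` of the second test pattern and ties with the zero word in erased distance. A filling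
pattern `p : E → 𝔽₂` is encoded by its extension by zero. -/
def tieTriples (c : Fin n → ZMod 2) (t u e e₁ : ℕ) :
    Finset (Finset (Fin n) × Finset (Fin n) × (Fin n → ZMod 2)) :=
  {T | #T.1 = u ∧ #T.2.1 = e ∧ Disjoint T.1 T.2.1 ∧ (∀ i ∉ T.2.1, T.2.2 i = 0) ∧
    hammingNorm T.2.2 = e₁ ∧ hammingDist (testPattern2 T.1 T.2.1 T.2.2) c ≤ t ∧
    erasedDist T.1 T.2.1 c = u}

theorem mem_tieTriples_iff_suppEquiv {c p : Fin n → ZMod 2} {U E : Finset (Fin n)}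
    {t u e e₁ : ℕ} :
    (U, E, p) ∈ tieTriples c t u e e₁ ↔
      #U = u ∧ #E = e ∧ Disjoint U E ∧ suppEquiv p ⊆ E ∧ #(suppEquiv p) = e₁ ∧
        #((U ∪ E \ suppEquiv p) ∆ suppEquiv c) ≤ t ∧ #((U ∆ suppEquiv c) \ E) = u := by
  have supp_subset_iff : suppEquiv p ⊆ E ↔ ∀ i ∉ E, p i = 0 := by
    simp only [subset_iff, mem_suppEquiv, not_imp_comm, ne_eq]
  rw [tieTriples, mem_filter_univ, hammingDist_eq_card_symmDiff, suppEquiv_testPattern2,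
    erasedDist_eq_card_symmDiff_sdiff, supp_subset_iff]
  rfl

theorem card_tieTriples (c : Fin n → ZMod 2) (t u e e₁ : ℕ) :
    #(tieTriples c t u e e₁) = #(tiePatterns (suppEquiv c) t u e e₁) := by
  refine card_nbij' (fun T => (T.1 ∪ T.2.1 \ suppEquiv T.2.2, T.2.1 \ suppEquiv T.2.2,
      suppEquiv T.2.2)) (fun T => (T.1 \ T.2.1, T.2.1 ∪ T.2.2, suppEquiv.symm T.2.2)) ?_ ?_ ?_ ?_
  · rintro ⟨U, E, p⟩ hT
    obtain ⟨hU, hE, hUE, hpE, hp, hdist, herased⟩ := mem_tieTriples_iff_suppEquiv.1 hT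
    have disjoint_U_filled : Disjoint U (E \ suppEquiv p) := hUE.mono_right sdiff_subset
    simp only [mem_coe, tiePatterns, mem_filter_univ, sdiff_union_of_subset hpE,
      union_sdiff_cancel_right disjoint_U_filled, union_symmDiff_sdiff sdiff_subset,
      card_sdiff_add_card_eq_card hpE]
    refine ⟨subset_union_right, ?_, hU, hE, hp, hdist, herased⟩
    exact subset_compl_iff_disjoint_left.2
      (disjoint_union_left.2 ⟨hUE.mono_right hpE, sdiff_disjoint⟩)
  · rintro ⟨Y, F, P⟩ hT
    obtain ⟨hF, hP, hU, hE, hP_card, hdist, herased⟩ := (mem_filter.1 hT).2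
    have disjoint_YP : Disjoint Y P := subset_compl_iff_disjoint_left.1 hP
    have disjoint_FP : Disjoint F P := disjoint_YP.mono_left hF
    rw [← sdiff_union_of_subset hF, union_symmDiff_sdiff subset_union_left] at herased
    simp only [mem_coe, mem_tieTriples_iff_suppEquiv, Equiv.apply_symm_apply,
      union_sdiff_cancel_right disjoint_FP, sdiff_union_of_subset hF,
      card_union_of_disjoint disjoint_FP]
    exact ⟨hU, hE, disjoint_union_right.2 ⟨sdiff_disjoint, disjoint_YP.mono_left sdiff_subset⟩,
      subset_union_right, hP_card, hdist, herased⟩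
  · rintro ⟨U, E, p⟩ hT
    obtain ⟨-, -, hUE, hpE, -⟩ := mem_tieTriples_iff_suppEquiv.1 hT
    simp only [Equiv.symm_apply_apply, sdiff_union_of_subset hpE,
      union_sdiff_cancel_right (hUE.mono_right sdiff_subset)]
  · rintro ⟨Y, F, P⟩ hT
    obtain ⟨hF, hP, -⟩ := (mem_filter.1 hT).2
    have disjoint_FP : Disjoint F P := (subset_compl_iff_disjoint_left.1 hP).mono_left hF
    simp only [Equiv.apply_symm_apply, union_sdiff_cancel_right disjoint_FP,
      sdiff_union_of_subset hF]

theorem disjoint_tieTriples {c c' : Fin n → ZMod 2} {t : ℕ} (u e e₁ : ℕ)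
    (hcc' : 2 * t + 1 ≤ hammingDist c c') :
    Disjoint (tieTriples c t u e e₁) (tieTriples c' t u e e₁) := by
  rw [disjoint_left]
  intro T hT hT'
  obtain ⟨-, -, -, -, -, hc, -⟩ := (mem_filter.1 hT).2
  obtain ⟨-, -, -, -, -, hc', -⟩ := (mem_filter.1 hT').2
  have triangle := hammingDist_triangle_left c c' (testPattern2 T.1 T.2.1 T.2.2)
  omega

end Words

theorem pairwise_le_hammingDist_of_forall_le_hammingNorm {ι : Type*} {β : ι → Type*} [Fintype ι]
    [∀ i, DecidableEq (β i)] [∀ i, AddGroup (β i)] (C : AddSubgroup (∀ i, β i)) {d : ℕ}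
    (hC : ∀ c ∈ C, c ≠ 0 → d ≤ hammingNorm c) :
    (C : Set (∀ i, β i)).Pairwise fun c c' => d ≤ hammingDist c c' := by
  intro c hc c' hc' hne
  rw [hammingDist_eq_hammingNorm]
  exact hC _ (C.add_mem (C.neg_mem hc) hc') (neg_add_eq_zero.not.2 hne)

theorem eaed_tie_count_L_general {n t : ℕ} (C : Set (Fin n → ZMod 2)) [DecidablePred (· ∈ C)]
    (hC : C.Pairwise fun c c' => 2 * t + 1 ≤ hammingDist c c') (u e e₁ r : ℕ) :
    #{T : Finset (Fin n) × Finset (Fin n) × (Fin n → ZMod 2) |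
        #T.1 = u ∧ #T.2.1 = e ∧ Disjoint T.1 T.2.1 ∧
        (∀ i ∉ T.2.1, T.2.2 i = 0) ∧ hammingNorm T.2.2 = e₁ ∧
        ∃ c ∈ C, hammingNorm c = r ∧
          hammingDist (testPattern2 T.1 T.2.1 T.2.2) c ≤ t ∧ erasedDist T.1 T.2.1 c = u} =
      #{c : Fin n → ZMod 2 | c ∈ C ∧ hammingNorm c = r} *
        ∑ ab ∈ flipCounts t u e e₁ r, ∑ lg ∈ erasureCounts n u e e₁ r ab.1 ab.2,
          r.choose ab.1 * (n - r).choose ab.2 * (n - r - ab.2).choose lg.1 * ab.2.choose lg.2 *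
            chooseZ (r - ab.1) ((e : ℤ) - e₁ - lg.2) * chooseZ ab.1 ((e₁ : ℤ) - lg.1) := by
  trans #(({c | c ∈ C ∧ hammingNorm c = r} : Finset (Fin n → ZMod 2)).biUnion
    fun c => tieTriples c t u e e₁)
  · congr 1
    ext T
    simp only [tieTriples, mem_filter, mem_univ, true_and, mem_biUnion]
    tauto
  · rw [card_biUnion fun c hc c' hc' hne => disjoint_tieTriples u e e₁ <|
      hC (mem_filter.1 hc).2.1 (mem_filter.1 hc').2.1 hne, ← smul_eq_mul, ← sum_const]
    refine sum_congr rfl fun c hc => ?_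
    have card_supp : #(suppEquiv c) = r := (mem_filter.1 hc).2.2
    rw [card_tieTriples, card_tiePatterns, card_compl, card_supp, Fintype.card_fin]

end TieCount

/-- For a binary linear code with minimum distance at least `2t+1`
and `u + e − e₁ > t`, the number of triples `(U, E, p)` for which some codeword `c`
of weight `r` satisfies `d(y⁽²⁾, c) ≤ t` and `d_E(c) = d_E(0) = u` equals
`A_r · ∑_{(a,b) ∈ S_{a,b}} ∑_{(λ,γ) ∈ (S_λ × S_γ) ∩ S_=}
  C(r,a)·C(n−r,b)·C(n−r−b,λ)·C(b,γ)·C(r−a, e−e₁−γ)·C(a, e₁−λ)`. -/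
theorem eaed_tie_count_L {n t : ℕ}
    (C : Submodule (ZMod 2) (Fin n → ZMod 2)) [DecidablePred (· ∈ C)]
    (hdmin : ∀ c ∈ C, c ≠ 0 → 2 * t + 1 ≤ hammingNorm c)
    (u e e₁ r : ℕ) (h : (t : ℤ) < u + e - e₁) :
    (Finset.univ.filter
        (fun T : Finset (Fin n) × Finset (Fin n) × (Fin n → ZMod 2) =>
          T.1.card = u ∧ T.2.1.card = e ∧ Disjoint T.1 T.2.1 ∧
          (∀ i ∉ T.2.1, T.2.2 i = 0) ∧ hammingNorm T.2.2 = e₁ ∧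
          ∃ c ∈ C, hammingNorm c = r ∧
            hammingDist (testPattern2 T.1 T.2.1 T.2.2) c ≤ t ∧
            erasedDist T.1 T.2.1 c = u)).card =
      (Finset.univ.filter
          (fun c : Fin n → ZMod 2 => c ∈ C ∧ hammingNorm c = r)).card *
        ∑ ab ∈ (Finset.range (t + 1) ×ˢ Finset.range (t + 1)).filter
            (fun ab => ab.1 + ab.2 ≤ t ∧
              (r : ℤ) + ab.2 = u + e - e₁ + ab.1),
          ∑ lg ∈ (Finset.range (n + 1) ×ˢ Finset.range (n + 1)).filter
              (fun lg =>
                ((lg.1 : ℤ) ≤ n - r - ab.2 ∧ (e₁ : ℤ) - lg.1 ≤ ab.1) ∧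
                ((lg.2 : ℤ) ≤ ab.2 ∧ (e : ℤ) - e₁ - lg.2 ≤ (r : ℤ) - ab.1) ∧
                ((ab.2 : ℤ) - lg.2 + ((ab.1 : ℤ) - ((e₁ : ℤ) - lg.1)) = u)),
            r.choose ab.1 * (n - r).choose ab.2 * (n - r - ab.2).choose lg.1 *
              ab.2.choose lg.2 * chooseZ (r - ab.1) ((e : ℤ) - e₁ - lg.2) *
              chooseZ ab.1 ((e₁ : ℤ) - lg.1) := by
  exact eaed_tie_count_L_general (C : Set (Fin n → ZMod 2))
    (pairwise_le_hammingDist_of_forall_le_hammingNorm C.toAddSubgroup hdmin) u e e₁ r
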